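/- Let A be a unital simple C*-algebra with a unique tracial state τ, and suppose the additive subgroup E_A of ℝ generated by {(τ⊗Tr)(p) : p a projection in M_n(A), n ≥ 1} is cyclic, i.e. E_A = ℤα for a single real number α > 0. Then F(A) = {1}. -/

import Mathlib

open scoped Matrix ComplexOrder

section CommonDefs

variable (A : Type*) [CStarAlgebra A]

/-- `τ` is a tracial state on the unital C*-algebra `A`. -/
structure IsTracialState (τ : A →ₗ[ℂ] ℂ) : Prop where
  map_one : τ 1 = 1
  nonneg : ∀ a : A, 0 ≤ τ (star a * a)
  tracial : ∀ a b : A, τ (a * b) = τ (b * a)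

/-- `A` is simple: every closed two-sided ideal is trivial. -/
def IsSimpleCStarAlgebra : Prop :=
  ∀ I : TwoSidedIdeal A, IsClosed (I : Set A) → I = ⊥ ∨ I = ⊤

/-- `φ` is a *-isomorphism from `A` onto the corner `p Mₙ(A) p`. -/
def IsCornerIso {n : ℕ} (p : Matrix (Fin n) (Fin n) A)
    (φ : A → Matrix (Fin n) (Fin n) A) : Prop :=
  Function.Injective φ ∧
  (∀ a b : A, φ (a + b) = φ a + φ b) ∧
  (∀ a b : A, φ (a * b) = φ a * φ b) ∧
  (∀ (c : ℂ) (a : A), φ (c • a) = c • φ a) ∧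
  (∀ a : A, φ (star a) = star (φ a)) ∧
  Set.range φ = {x : Matrix (Fin n) (Fin n) A | p * x * p = x}

/-- The fundamental group of a unital simple C*-algebra with unique tracial state `τ`:
the set of values `(τ ⊗ Tr)(p)` over projections `p ∈ Mₙ(A)` whose corner `p Mₙ(A) p`
is *-isomorphic to `A`. -/
def fundamentalGroup (τ : A →ₗ[ℂ] ℂ) : Set ℝ :=
  {t : ℝ | ∃ (n : ℕ) (p : Matrix (Fin n) (Fin n) A), 0 < n ∧
    p * p = p ∧ star p = p ∧ (∃ φ, IsCornerIso A p φ) ∧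
    (∑ i, τ (p i i)) = (t : ℂ)}

end CommonDefs

/-- The set of trace values `(τ ⊗ Tr)(p)` of projections `p ∈ Mₙ(A)`, `n ≥ 1`;
the additive subgroup of `ℝ` it generates is `τ_*(K₀(A))`. -/
def projectionTraces (A : Type*) [CStarAlgebra A] (τ : A →ₗ[ℂ] ℂ) : Set ℝ :=
  {t : ℝ | ∃ (n : ℕ) (p : Matrix (Fin n) (Fin n) A), 0 < n ∧
    p * p = p ∧ star p = p ∧ (∑ i, τ (p i i)) = (t : ℂ)}

/-!
Any `*`-isomorphism `f : A → p Mₙ(A) p` with `τ(p) = t` multiplies traces by `t`: the functional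
`τ ∘ Tr ∘ f` is positive and tracial, so by uniqueness it is `t τ`. Amplifying `f` to matrices over
`A` therefore gives `t E_A ⊆ E_A`. Moreover `t⁻¹ ∈ F(A)`: since `A` is simple, `p` is full, so there
is a row `v` over `A` with `v v* = 1` and `v (p ⊕ ⋯ ⊕ p) = v`. The embedding `a ↦ v* a v` factors
through the amplification of `f` that has range `(p ⊕ ⋯ ⊕ p) M (p ⊕ ⋯ ⊕ p)`, and the factor is
a `*`-isomorphism of `A` onto a corner of trace `t⁻¹`. If `E_A = ℤα`, then both `t` and `t⁻¹` are
integers, and `t ≥ 0` forces `t = 1`.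
-/

section CornerEmbedding

variable {R A B C ι n : Type*} [Monoid R]

section Basic

variable [NonAssocSemiring A] [DistribMulAction R A] [Star A]
  [NonUnitalNonAssocSemiring C] [DistribMulAction R C] [Star C]

/-- A possibly non-unital *-homomorphism `f : A → C` is a corner embedding if it is a
*-isomorphism from `A` onto the corner `p C p`, where `p` is the projection `f 1`. -/
structure IsCornerEmbedding (f : A →⋆ₙₐ[R] C) : Prop where
  injective : Function.Injective f
  exists_apply_eq : ∀ x, f 1 * x * f 1 = x → ∃ a, f a = x

theorem map_one_mul_map_mul_map_one (f : A →⋆ₙₐ[R] C) (a : A) : f 1 * f a * f 1 = f a := by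
  simp only [← map_mul, one_mul, mul_one]

theorem IsCornerEmbedding.exists_factor [NonAssocSemiring B] [DistribMulAction R B] [Star B]
    {f : B →⋆ₙₐ[R] C} {g : A →⋆ₙₐ[R] C} (hf : IsCornerEmbedding f) (hg : IsCornerEmbedding g)
    (hgf : ∀ a, f 1 * g a * f 1 = g a) :
    ∃ h : A →⋆ₙₐ[R] B, IsCornerEmbedding h ∧ ∀ a, f (h a) = g a := by
  choose lift hlift using fun a => hf.exists_apply_eq _ (hgf a)
  let h : A →⋆ₙₐ[R] B :=
    { toFun := lift
      map_smul' c a := hf.injective (by simp only [map_smul, hlift, MonoidHom.id_apply])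
      map_zero' := hf.injective (by simp only [map_zero, hlift])
      map_add' a b := hf.injective (by simp only [map_add, hlift])
      map_mul' a b := hf.injective (by simp only [map_mul, hlift])
      map_star' a := hf.injective (by simp only [map_star, hlift]) }
  refine ⟨h, ⟨fun a b hab => hg.injective ?_, fun x hx => ?_⟩, hlift⟩
  · rw [← hlift a, ← hlift b]
    exact congrArg f hab
  · obtain ⟨a, ha⟩ := hg.exists_apply_eq (f x) (by
      rw [← hlift 1, ← map_mul, ← map_mul]
      exact congrArg f hx)
    exact ⟨a, hf.injective ((hlift a).trans ha)⟩

end Basic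

variable [Fintype ι] [Fintype n]

section Amplify

variable [NonUnitalNonAssocSemiring A] [DistribMulAction R A] [Star A]
  [NonUnitalNonAssocSemiring B] [DistribMulAction R B] [Star B]

variable (ι) in
/-- The amplification `M_ι(A) → M_ι(M_n(B)) = M_{ι × n}(B)` of a *-homomorphism `A → M_n(B)`, which
carries projections over `A` to projections over `B`. -/
def amplify (f : A →⋆ₙₐ[R] Matrix n n B) :
    Matrix ι ι A →⋆ₙₐ[R] Matrix (ι × n) (ι × n) B where
  toFun M := Matrix.comp ι ι n n B (M.map f)
  map_smul' c M := by ext; simp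
  map_zero' := by ext; simp
  map_add' M N := by ext; simp
  map_mul' M N := by
    rw [Matrix.map_mul]
    exact map_mul (Matrix.compRingEquiv ι n B) _ _
  map_star' M := by ext; simp [Matrix.star_apply, map_star]

theorem amplify_apply (f : A →⋆ₙₐ[R] Matrix n n B) (M : Matrix ι ι A) :
    amplify ι f M = Matrix.comp ι ι n n B (M.map f) :=
  rfl

theorem trace_amplify (f : A →⋆ₙₐ[R] Matrix n n B) (M : Matrix ι ι A) :
    (amplify ι f M).trace = (f M.trace).trace :=
  calc (amplify ι f M).trace = ∑ i, (f (M i i)).trace := by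
        rw [Matrix.trace, Fintype.sum_prod_type]
        rfl
    _ = (f M.trace).trace := by
        rw [← Matrix.trace_sum, ← map_sum]
        rfl

end Amplify

section AmplifyOne

variable [NonAssocSemiring A] [DistribMulAction R A] [Star A]
  [NonUnitalNonAssocSemiring B] [DistribMulAction R B] [Star B] [DecidableEq ι]

theorem amplify_one (f : A →⋆ₙₐ[R] Matrix n n B) :
    amplify ι f 1 = Matrix.comp ι ι n n B (Matrix.diagonal fun _ => f 1) := by
  rw [amplify_apply, ← Matrix.diagonal_one, Matrix.diagonal_map (map_zero f)]

theorem vecMul_amplify_one (f : A →⋆ₙₐ[R] Matrix n n B) (v : ι × n → B) (i : ι) (b : n) :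
    (v ᵥ* amplify ι f 1) (i, b) = ((fun a => v (i, a)) ᵥ* f 1) b := by
  simp only [amplify_one, Matrix.vecMul, dotProduct, Fintype.sum_prod_type, Matrix.comp_apply]
  rw [Fintype.sum_eq_single i fun j hj => by simp [Matrix.diagonal_apply_ne _ hj]]
  simp only [Matrix.diagonal_apply_eq]

theorem IsCornerEmbedding.amplify {f : A →⋆ₙₐ[R] Matrix n n B} (hf : IsCornerEmbedding f) :
    IsCornerEmbedding (amplify ι f) where
  injective := (Matrix.comp ι ι n n B).injective.comp (Matrix.map_injective hf.injective)
  exists_apply_eq X hX := by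
    obtain ⟨Y, rfl⟩ := (Matrix.compRingEquiv ι n B).surjective X
    have hY : Matrix.diagonal (fun _ => f 1) * Y * Matrix.diagonal (fun _ => f 1) = Y := by
      apply (Matrix.compRingEquiv ι n B).injective
      rw [map_mul, map_mul]
      rwa [amplify_one] at hX
    have hY_entry (i j : ι) : f 1 * Y i j * f 1 = Y i j := by
      simpa only [Matrix.mul_diagonal, Matrix.diagonal_mul] using congrFun₂ hY i j
    choose M hM using fun i j => hf.exists_apply_eq _ (hY_entry i j)
    exact ⟨Matrix.of M, congrArg (Matrix.comp ι ι n n B) (Matrix.ext hM)⟩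

end AmplifyOne

end CornerEmbedding

section RowEmbedding

variable {R A ι : Type*} [Monoid R] [Semiring A] [StarRing A] [DistribMulAction R A]
  [IsScalarTower R A A] [SMulCommClass R A A] [Fintype ι]

variable (R) in
/-- The embedding `a ↦ v* a v` of `A` into `M_ι(A)` given by a row vector `v` with `v v* = 1`. -/
def rowEmbedding (v : ι → A) (hv : v ⬝ᵥ star v = 1) : A →⋆ₙₐ[R] Matrix ι ι A where
  toFun a := Matrix.vecMulVec (star v) (a • v)
  map_smul' c a := by rw [smul_assoc, Matrix.vecMulVec_smul]; rfl
  map_zero' := by rw [zero_smul, Matrix.vecMulVec_zero]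
  map_add' a b := by rw [add_smul, Matrix.vecMulVec_add]
  map_mul' a b := by
    rw [Matrix.vecMulVec_mul_vecMulVec, smul_dotProduct, hv, smul_eq_mul, mul_one, mul_smul]
  map_star' a := by ext; simp [Matrix.star_apply, Matrix.vecMulVec_apply, mul_assoc]

theorem rowEmbedding_apply (v : ι → A) (hv : v ⬝ᵥ star v = 1) (a : A) :
    rowEmbedding R v hv a = Matrix.vecMulVec (star v) (a • v) :=
  rfl

theorem isCornerEmbedding_rowEmbedding (v : ι → A) (hv : v ⬝ᵥ star v = 1) :
    IsCornerEmbedding (rowEmbedding R v hv) where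
  injective a b hab := by
    have recover (c : A) : v ⬝ᵥ (rowEmbedding R v hv c *ᵥ star v) = c := by
      rw [rowEmbedding_apply, Matrix.vecMulVec_mulVec, smul_dotProduct, hv]
      simp [dotProduct_smul, hv]
    rw [← recover a, hab, recover]
  exists_apply_eq x hx := by
    rw [rowEmbedding_apply, one_smul, Matrix.vecMulVec_mul, Matrix.vecMulVec_mul_vecMulVec] at hx
    exact ⟨(v ᵥ* x) ⬝ᵥ star v, hx⟩

theorem mul_rowEmbedding_mul {v : ι → A} (hv : v ⬝ᵥ star v = 1) {p : Matrix ι ι A}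
    (hp : IsSelfAdjoint p) (hvp : v ᵥ* p = v) (a : A) :
    p * rowEmbedding R v hv a * p = rowEmbedding R v hv a := by
  have hpv : p *ᵥ star v = star v := by
    rw [← hp.star_eq, Matrix.star_eq_conjTranspose, ← Matrix.star_vecMul, hvp]
  rw [rowEmbedding_apply, Matrix.mul_vecMulVec, hpv, Matrix.vecMulVec_mul, Matrix.smul_vecMul, hvp]

end RowEmbedding

section SimpleRing

/-- The topological closure of a two-sided ideal, which lets topological simplicity be compared with
algebraic simplicity. -/
def twoSidedIdealClosure {R : Type*} [Ring R] [TopologicalSpace R] [IsTopologicalRing R]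
    (I : TwoSidedIdeal R) : TwoSidedIdeal R :=
  .mk' (closure I) (subset_closure I.zero_mem)
    (fun hx hy => map_mem_closure₂ continuous_add hx hy fun _ ha _ hb => I.add_mem ha hb)
    (fun hx => map_mem_closure continuous_neg hx fun _ ha => I.neg_mem ha)
    (fun {x _} hy => map_mem_closure (continuous_const_mul x) hy fun _ ha => I.mul_mem_left _ _ ha)
    (fun {_ y} hx => map_mem_closure (f := (· * y)) (continuous_mul_const y) hx
      fun _ ha => I.mul_mem_right _ _ ha)

theorem coe_twoSidedIdealClosure {R : Type*} [Ring R] [TopologicalSpace R] [IsTopologicalRing R]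
    (I : TwoSidedIdeal R) : (twoSidedIdealClosure I : Set R) = closure I :=
  TwoSidedIdeal.coe_mk' _ _ _ _ _ _

theorem twoSidedIdeal_eq_top_of_one_mem_closure {R : Type*} [NormedRing R]
    [HasSummableGeomSeries R] {I : TwoSidedIdeal R} (h : 1 ∈ closure (I : Set R)) : I = ⊤ := by
  obtain ⟨_, ⟨u, rfl⟩, hu⟩ := mem_closure_iff.1 h _ Units.isOpen isUnit_one
  exact I.one_mem_iff.1 (by simpa using I.mul_mem_left (↑u⁻¹) u hu)

theorem isSimpleRing_of_isClosed {R : Type*} [NormedRing R] [HasSummableGeomSeries R]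
    [Nontrivial R] (h : ∀ I : TwoSidedIdeal R, IsClosed (I : Set R) → I = ⊥ ∨ I = ⊤) :
    IsSimpleRing R := by
  refine .of_eq_bot_or_eq_top fun I => ?_
  have hcl : (twoSidedIdealClosure I : Set R) = closure I := coe_twoSidedIdealClosure I
  refine (h (twoSidedIdealClosure I) (hcl ▸ isClosed_closure)).imp (fun hbot => ?_) fun htop => ?_
  · rw [eq_bot_iff, ← hbot]
    exact TwoSidedIdeal.le_iff.2 (hcl ▸ subset_closure)
  · apply twoSidedIdeal_eq_top_of_one_mem_closure
    rw [← hcl, htop]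
    trivial

theorem exists_sum_mul_mul_eq_one {R : Type*} [Ring R] [IsSimpleRing R] {x : R} (hx : x ≠ 0) :
    ∃ (k : ℕ) (a b : Fin k → R), ∑ i, a i * x * b i = 1 := by
  have h_one_mem : (1 : R) ∈ TwoSidedIdeal.span {x} :=
    IsSimpleRing.one_mem_of_ne_zero_mem _ hx (TwoSidedIdeal.subset_span rfl)
  rw [TwoSidedIdeal.mem_span_iff_mem_addSubgroup_closure,
    ← Submodule.span_int_eq_addSubgroupClosure, Submodule.mem_toAddSubgroup,
    Submodule.mem_span_set'] at h_one_mem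
  obtain ⟨k, c, y, hsum⟩ := h_one_mem
  have hy (i : Fin k) : ∃ a b, a * x * b = y i := by
    obtain ⟨_, ⟨a, -, _, rfl, rfl⟩, b, -, h⟩ := (y i).2
    exact ⟨a, b, h⟩
  choose a b hab using hy
  exact ⟨k, fun i => c i • a i, b, by simpa only [smul_mul_assoc, hab] using hsum⟩

theorem exists_vecMul_eq_and_sum_dotProduct_eq_one {R n : Type*} [Ring R] [IsSimpleRing R]
    [Fintype n] {p : Matrix n n R} (hp : IsIdempotentElem p) (hp0 : p ≠ 0) :
    ∃ (k : ℕ) (u w : Fin k → n → R), (∀ l, u l ᵥ* p = u l) ∧ ∑ l, u l ⬝ᵥ w l = 1 := by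
  classical
  obtain ⟨i, j, hij⟩ : ∃ i j, p i j ≠ 0 := by
    by_contra! h
    exact hp0 (Matrix.ext h)
  obtain ⟨k, a, b, hab⟩ := exists_sum_mul_mul_eq_one hij
  -- Left multiples of a single row of `p` suffice, as one nonzero entry generates the unit ideal.
  refine ⟨k, fun l => a l • p i, fun l => Pi.single j (b l), fun l => ?_, ?_⟩
  · rw [Matrix.smul_vecMul]
    exact congrArg (a l • ·) (congrFun hp i)
  · simpa using hab

end SimpleRing

section UnitVector

variable {A ι : Type*} [CStarAlgebra A] [Fintype ι]

open scoped InnerProductSpace WithCStarModule in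
theorem exists_one_le_smul_dotProduct_star [PartialOrder A] [StarOrderedRing A] {x y : ι → A}
    (hxy : x ⬝ᵥ y = 1) : ∃ c : ℝ, 1 ≤ c • (x ⬝ᵥ star x) := by
  let X : C⋆ᵐᵒᵈ(A, ι → A) := WithCStarModule.equiv A (ι → A) |>.symm x
  let Y : C⋆ᵐᵒᵈ(A, ι → A) := WithCStarModule.equiv A (ι → A) |>.symm (star y)
  have hYX : ⟪Y, X⟫_A = 1 := by
    simpa [X, Y, WithCStarModule.pi_inner, WithCStarModule.inner_def, dotProduct] using hxy
  have hXY : ⟪X, Y⟫_A = 1 := by rw [← CStarModule.star_inner, hYX, star_one]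
  refine ⟨‖Y‖ ^ 2, ?_⟩
  calc (1 : A) = ⟪Y, X⟫_A * ⟪X, Y⟫_A := by rw [hYX, hXY, one_mul]
    _ ≤ ‖Y‖ ^ 2 • ⟪X, X⟫_A := CStarModule.inner_mul_inner_swap_le

theorem smul_dotProduct_star_smul {R : Type*} [NonUnitalSemiring R] [StarRing R] (c : R)
    (x : ι → R) : (c • x) ⬝ᵥ star (c • x) = c * (x ⬝ᵥ star x) * star c := by
  simp [dotProduct, Finset.sum_mul, Finset.mul_sum, mul_assoc]

theorem exists_smul_dotProduct_star_eq_one {x y : ι → A} (hxy : x ⬝ᵥ y = 1) :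
    ∃ c : A, (c • x) ⬝ᵥ star (c • x) = 1 := by
  let _ := CStarAlgebra.spectralOrder A
  have _ := CStarAlgebra.spectralOrderedRing A
  set h := x ⬝ᵥ star x
  have h_nonneg : 0 ≤ h := Finset.sum_nonneg fun i _ => mul_star_self_nonneg (x i)
  have h_unit : IsUnit h := by
    obtain ⟨r, hr⟩ := exists_one_le_smul_dotProduct_star hxy
    have := CStarAlgebra.isUnit_of_le 1 hr
    rw [Algebra.smul_def, (Algebra.commute_algebraMap_left r _).isUnit_mul_iff] at this
    exact this.2
  have h_star : star (h ^ (-(1 / 2) : ℝ)) = h ^ (-(1 / 2) : ℝ) :=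
    (IsSelfAdjoint.of_nonneg CFC.rpow_nonneg).star_eq
  refine ⟨h ^ (-(1 / 2) : ℝ), ?_⟩
  calc (h ^ (-(1 / 2) : ℝ) • x) ⬝ᵥ star (h ^ (-(1 / 2) : ℝ) • x)
      = h ^ (-(1 / 2) : ℝ) * h * h ^ (-(1 / 2) : ℝ) := by rw [smul_dotProduct_star_smul, h_star]
    _ = h ^ (-(1 / 2) : ℝ) * h ^ (1 : ℝ) * h ^ (-(1 / 2) : ℝ) := by rw [CFC.rpow_one h]
    _ = 1 := by
        rw [← CFC.rpow_add h_unit, ← CFC.rpow_add h_unit,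
          show -(1 / 2) + 1 + -(1 / 2) = (0 : ℝ) by norm_num, CFC.rpow_zero h]

theorem exists_dotProduct_star_eq_one_and_vecMul_eq {n : Type*} [Fintype n] [IsSimpleRing A]
    {p : Matrix n n A} (hp : IsIdempotentElem p) (hp0 : p ≠ 0) :
    ∃ (k : ℕ) (v : Fin k × n → A), v ⬝ᵥ star v = 1 ∧
      ∀ l, (fun a => v (l, a)) ᵥ* p = fun a => v (l, a) := by
  obtain ⟨k, u, w, hup, huw⟩ := exists_vecMul_eq_and_sum_dotProduct_eq_one hp hp0
  obtain ⟨c, hc⟩ := exists_smul_dotProduct_star_eq_one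
    (x := Function.uncurry u) (y := Function.uncurry w)
    (by rw [dotProduct, Fintype.sum_prod_type]; exact huw)
  refine ⟨k, c • Function.uncurry u, hc, fun l => ?_⟩
  exact (Matrix.smul_vecMul c (u l) p).trans (congrArg (c • ·) (hup l))

end UnitVector

namespace IsTracialState

variable {A : Type*} [CStarAlgebra A] {τ : A →ₗ[ℂ] ℂ} {m n : Type*} [Fintype m] [Fintype n]

theorem nontrivial (hτ : IsTracialState A τ) : Nontrivial A :=
  ⟨1, 0, fun h => one_ne_zero (hτ.map_one.symm.trans (h ▸ map_zero τ))⟩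

theorem trace_mul_comm (hτ : IsTracialState A τ) (M : Matrix m n A) (N : Matrix n m A) :
    τ (M * N).trace = τ (N * M).trace := by
  simp only [Matrix.trace, Matrix.diag_apply, Matrix.mul_apply, map_sum]
  rw [Finset.sum_comm]
  simp only [hτ.tracial]

theorem trace_rowEmbedding_one (hτ : IsTracialState A τ) (v : n → A) (hv : v ⬝ᵥ star v = 1) :
    τ (rowEmbedding ℂ v hv 1).trace = 1 :=
  calc τ (rowEmbedding ℂ v hv 1).trace = τ (v ⬝ᵥ star v) := by
        simp only [rowEmbedding_apply, one_smul, Matrix.trace_vecMulVec, dotProduct, map_sum,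
          hτ.tracial]
    _ = 1 := by rw [hv, hτ.map_one]

theorem trace_star_mul_self_nonneg (hτ : IsTracialState A τ) (M : Matrix n n A) :
    0 ≤ τ (star M * M).trace := by
  simp only [Matrix.trace, Matrix.diag_apply, Matrix.mul_apply, map_sum]
  exact Finset.sum_nonneg fun i _ => Finset.sum_nonneg fun k _ => hτ.nonneg (M k i)

theorem trace_nonneg_of_isStarProjection (hτ : IsTracialState A τ) {p : Matrix n n A}
    (hp : IsStarProjection p) : 0 ≤ τ p.trace := by
  simpa only [hp.isSelfAdjoint.star_eq, hp.isIdempotentElem.eq]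
    using hτ.trace_star_mul_self_nonneg p

theorem apply_eq_mul_of_unique (hτ : IsTracialState A τ)
    (huniq : ∀ σ : A →ₗ[ℂ] ℂ, IsTracialState A σ → σ = τ) {σ : A →ₗ[ℂ] ℂ}
    (hσ_nonneg : ∀ a, 0 ≤ σ (star a * a)) (hσ_comm : ∀ a b, σ (a * b) = σ (b * a)) (a : A) :
    σ a = σ 1 * τ a := by
  have hσ1 : 0 < 1 + σ 1 :=
    add_pos_of_pos_of_nonneg one_pos (by simpa only [star_one, one_mul] using hσ_nonneg 1)
  -- Adding `τ` to `σ` allows normalization even when `σ 1 = 0`.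
  have hnormalized : IsTracialState A ((1 + σ 1)⁻¹ • (τ + σ)) :=
    { map_one := by
        rw [LinearMap.smul_apply, LinearMap.add_apply, hτ.map_one, smul_eq_mul,
          inv_mul_cancel₀ hσ1.ne']
      nonneg b := mul_nonneg (inv_nonneg.2 hσ1.le) (add_nonneg (hτ.nonneg b) (hσ_nonneg b))
      tracial b c := by
        simp only [LinearMap.smul_apply, LinearMap.add_apply, hτ.tracial b c, hσ_comm b c] }
  have h : (1 + σ 1)⁻¹ * (τ a + σ a) = τ a := LinearMap.congr_fun (huniq _ hnormalized) a
  rw [inv_mul_eq_iff_eq_mul₀ hσ1.ne'] at h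
  linear_combination h

theorem trace_map_eq_mul (hτ : IsTracialState A τ)
    (huniq : ∀ σ : A →ₗ[ℂ] ℂ, IsTracialState A σ → σ = τ) (f : A →⋆ₙₐ[ℂ] Matrix n n A) (a : A) :
    τ (f a).trace = τ (f 1).trace * τ a := by
  let σ : A →ₗ[ℂ] ℂ := τ ∘ₗ Matrix.traceLinearMap n ℂ A ∘ₗ (f : A →ₗ[ℂ] Matrix n n A)
  refine hτ.apply_eq_mul_of_unique huniq (σ := σ) (fun b => ?_) (fun b c => ?_) a
  · change 0 ≤ τ (f (star b * b)).trace
    rw [map_mul, map_star]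
    exact hτ.trace_star_mul_self_nonneg _
  · change τ (f (b * c)).trace = τ (f (c * b)).trace
    rw [map_mul, map_mul, hτ.trace_mul_comm]

theorem trace_amplify_eq_mul (hτ : IsTracialState A τ)
    (huniq : ∀ σ : A →ₗ[ℂ] ℂ, IsTracialState A σ → σ = τ) (f : A →⋆ₙₐ[ℂ] Matrix n n A)
    (M : Matrix m m A) : τ (amplify m f M).trace = τ (f 1).trace * τ M.trace := by
  rw [trace_amplify, hτ.trace_map_eq_mul huniq]

end IsTracialState

section FundamentalGroup

variable {A : Type*} [CStarAlgebra A] {τ : A →ₗ[ℂ] ℂ}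

theorem mem_projectionTraces_of_isStarProjection {ι : Type*} [Fintype ι] {p : Matrix ι ι A}
    (hp : IsStarProjection p) {t : ℝ} (ht : τ p.trace = t) : t ∈ projectionTraces A τ := by
  cases isEmpty_or_nonempty ι with
  | inl _ =>
    refine ⟨1, 0, one_pos, by simp, by simp, ?_⟩
    simpa using ht
  | inr _ =>
    let e := Fintype.equivFin ι
    refine ⟨Fintype.card ι, p.submatrix e.symm e.symm, Fintype.card_pos, ?_, ?_, ?_⟩
    · rw [Matrix.submatrix_mul_equiv, hp.isIdempotentElem.eq]
    · rw [Matrix.star_eq_conjTranspose, Matrix.conjTranspose_submatrix,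
        ← Matrix.star_eq_conjTranspose, hp.isSelfAdjoint.star_eq]
    · rw [← ht, Matrix.trace, map_sum]
      exact e.symm.sum_comp fun i => τ (p i i)

theorem exists_isCornerIso_iff {n : ℕ} {p : Matrix (Fin n) (Fin n) A} (hp : IsIdempotentElem p) :
    (∃ φ, IsCornerIso A p φ) ↔
      ∃ f : A →⋆ₙₐ[ℂ] Matrix (Fin n) (Fin n) A, IsCornerEmbedding f ∧ f 1 = p := by
  constructor
  · rintro ⟨φ, hinj, hadd, hmul, hsmul, hstar, hrange⟩
    let f : A →⋆ₙₐ[ℂ] Matrix (Fin n) (Fin n) A :=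
      { toFun := φ
        map_smul' := hsmul
        map_zero' := by simpa using hsmul 0 0
        map_add' := hadd
        map_mul' := hmul
        map_star' := hstar }
    have mem_range (x) : (∃ a, f a = x) ↔ p * x * p = x := Set.ext_iff.1 hrange x
    obtain ⟨e, he⟩ := (mem_range p).2 (by rw [hp.eq, hp.eq])
    have hf1 : f 1 = p :=
      calc f 1 = p * f 1 * p := ((mem_range _).1 ⟨1, rfl⟩).symm
        _ = p := by rw [← he, ← map_mul, ← map_mul, mul_one, map_mul, he, hp.eq]
    exact ⟨f, ⟨hinj, fun x hx => (mem_range x).2 (hf1 ▸ hx)⟩, hf1⟩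
  · rintro ⟨f, hf, rfl⟩
    refine ⟨f, hf.injective, map_add f, map_mul f, map_smul f, map_star f, ?_⟩
    ext x
    refine ⟨?_, hf.exists_apply_eq x⟩
    rintro ⟨a, rfl⟩
    exact map_one_mul_map_mul_map_one f a

theorem mem_fundamentalGroup_iff [Nontrivial A] {t : ℝ} :
    t ∈ fundamentalGroup A τ ↔ ∃ (n : ℕ) (f : A →⋆ₙₐ[ℂ] Matrix (Fin n) (Fin n) A),
      IsCornerEmbedding f ∧ τ (f 1).trace = t := by
  constructor
  · rintro ⟨n, p, -, hp, -, hφ, ht⟩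
    obtain ⟨f, hf, rfl⟩ := (exists_isCornerIso_iff hp).1 hφ
    exact ⟨n, f, hf, by rw [← ht, Matrix.trace, map_sum]; rfl⟩
  · rintro ⟨n, f, hf, ht⟩
    have hf1 : IsStarProjection (f 1) := (IsStarProjection.one A).map f
    have hn : n ≠ 0 := by
      rintro rfl
      exact one_ne_zero (hf.injective (Subsingleton.elim (f 1) (f 0)))
    refine ⟨n, f 1, Nat.pos_of_ne_zero hn, hf1.isIdempotentElem, hf1.isSelfAdjoint,
      (exists_isCornerIso_iff hf1.isIdempotentElem).2 ⟨f, hf, rfl⟩, ?_⟩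
    rw [← ht, Matrix.trace, map_sum]
    rfl

theorem one_mem_fundamentalGroup (hτ : IsTracialState A τ) : 1 ∈ fundamentalGroup A τ := by
  have := hτ.nontrivial
  have hv : (1 : Fin 1 → A) ⬝ᵥ star 1 = 1 := by simp
  exact mem_fundamentalGroup_iff.2 ⟨1, rowEmbedding ℂ 1 hv, isCornerEmbedding_rowEmbedding 1 hv, by
    rw [hτ.trace_rowEmbedding_one, Complex.ofReal_one]⟩

theorem nonneg_of_mem_fundamentalGroup (hτ : IsTracialState A τ) {t : ℝ}
    (ht : t ∈ fundamentalGroup A τ) : 0 ≤ t := by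
  have := hτ.nontrivial
  obtain ⟨n, f, -, htr⟩ := mem_fundamentalGroup_iff.1 ht
  have := hτ.trace_nonneg_of_isStarProjection ((IsStarProjection.one A).map f)
  rwa [htr, Complex.zero_le_real] at this

theorem mul_mem_projectionTraces (hτ : IsTracialState A τ)
    (huniq : ∀ σ : A →ₗ[ℂ] ℂ, IsTracialState A σ → σ = τ) {t x : ℝ}
    (ht : t ∈ fundamentalGroup A τ) (hx : x ∈ projectionTraces A τ) :
    t * x ∈ projectionTraces A τ := by
  have := hτ.nontrivial
  obtain ⟨n, f, -, htr⟩ := mem_fundamentalGroup_iff.1 ht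
  obtain ⟨m, q, -, hq, hq_star, hqx⟩ := hx
  have hq_proj : IsStarProjection q := ⟨hq, hq_star⟩
  refine mem_projectionTraces_of_isStarProjection (hq_proj.map (amplify (Fin m) f)) ?_
  rw [hτ.trace_amplify_eq_mul huniq, htr, Complex.ofReal_mul, ← hqx, Matrix.trace, map_sum]
  rfl

theorem mul_mem_closure_projectionTraces (hτ : IsTracialState A τ)
    (huniq : ∀ σ : A →ₗ[ℂ] ℂ, IsTracialState A σ → σ = τ) {t x : ℝ}
    (ht : t ∈ fundamentalGroup A τ) (hx : x ∈ AddSubgroup.closure (projectionTraces A τ)) :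
    t * x ∈ AddSubgroup.closure (projectionTraces A τ) := by
  have hle : AddSubgroup.closure (projectionTraces A τ) ≤
      (AddSubgroup.closure (projectionTraces A τ)).comap (AddMonoidHom.mulLeft t) :=
    (AddSubgroup.closure_le _).2 fun y hy =>
      AddSubgroup.subset_closure (mul_mem_projectionTraces hτ huniq ht hy)
  exact hle hx

theorem exists_mem_fundamentalGroup_mul_eq_one (hA : IsSimpleCStarAlgebra A)
    (hτ : IsTracialState A τ) (huniq : ∀ σ : A →ₗ[ℂ] ℂ, IsTracialState A σ → σ = τ) {t : ℝ}
    (ht : t ∈ fundamentalGroup A τ) : ∃ s ∈ fundamentalGroup A τ, t * s = 1 := by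
  have := hτ.nontrivial
  have := isSimpleRing_of_isClosed hA
  obtain ⟨n, f, hf, htr⟩ := mem_fundamentalGroup_iff.1 ht
  have hf1 : IsStarProjection (f 1) := (IsStarProjection.one A).map f
  obtain ⟨k, v, hv, hvp⟩ := exists_dotProduct_star_eq_one_and_vecMul_eq hf1.isIdempotentElem
    ((map_ne_zero_iff f hf.injective).2 one_ne_zero)
  have hvP : v ᵥ* amplify (Fin k) f 1 = v := by
    ext ⟨l, b⟩
    rw [vecMul_amplify_one, hvp]
  obtain ⟨g, hg, hfg⟩ := hf.amplify.exists_factor (isCornerEmbedding_rowEmbedding v hv)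
    (mul_rowEmbedding_mul hv ((IsStarProjection.one _).map (amplify (Fin k) f)).isSelfAdjoint hvP)
  have htg : t * τ (g 1).trace = 1 :=
    calc t * τ (g 1).trace = τ (rowEmbedding ℂ v hv 1).trace := by
          rw [← hfg, hτ.trace_amplify_eq_mul huniq, htr]
      _ = 1 := hτ.trace_rowEmbedding_one v hv
  have hg1 := hτ.trace_nonneg_of_isStarProjection ((IsStarProjection.one A).map g)
  obtain ⟨s, hs⟩ : ∃ s : ℝ, τ (g 1).trace = s := ⟨_, Complex.eq_re_of_ofReal_le hg1⟩
  exact ⟨s, mem_fundamentalGroup_iff.2 ⟨k, g, hg, hs⟩, by exact_mod_cast hs ▸ htg⟩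

end FundamentalGroup

theorem eq_one_of_mul_mem_zmultiples {K : Type*} [Field K] [LinearOrder K] [IsStrictOrderedRing K]
    {s t α : K} (hα : α ≠ 0) (ht : 0 ≤ t) (hts : t * s = 1)
    (htα : t * α ∈ AddSubgroup.zmultiples α) (hsα : s * α ∈ AddSubgroup.zmultiples α) : t = 1 := by
  have eq_intCast {r : K} (hr : r * α ∈ AddSubgroup.zmultiples α) : ∃ k : ℤ, (k : K) = r := by
    obtain ⟨k, hk⟩ := AddSubgroup.mem_zmultiples_iff.1 hr
    exact ⟨k, mul_right_cancel₀ hα (by rwa [zsmul_eq_mul] at hk)⟩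
  obtain ⟨m, rfl⟩ := eq_intCast htα
  obtain ⟨k, rfl⟩ := eq_intCast hsα
  have hmk : m * k = 1 := by exact_mod_cast hts
  rw [Int.eq_one_of_mul_eq_one_right (by exact_mod_cast ht) hmk, Int.cast_one]

/-- if `E_A = τ_*(K₀(A))` is the cyclic group `ℤα` for some `α > 0`,
then the fundamental group of `A` is trivial. -/
theorem fundamentalGroup_eq_one_of_cyclic
    (A : Type*) [CStarAlgebra A]
    (hA : IsSimpleCStarAlgebra A)
    (τ : A →ₗ[ℂ] ℂ) (hτ : IsTracialState A τ)
    (huniq : ∀ σ : A →ₗ[ℂ] ℂ, IsTracialState A σ → σ = τ)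
    (α : ℝ) (hα : 0 < α)
    (hcyc : AddSubgroup.closure (projectionTraces A τ) = AddSubgroup.zmultiples α) :
    fundamentalGroup A τ = {1} := by
  refine Set.eq_singleton_iff_unique_mem.2 ⟨one_mem_fundamentalGroup hτ, fun t ht => ?_⟩
  obtain ⟨s, hs, hts⟩ := exists_mem_fundamentalGroup_mul_eq_one hA hτ huniq ht
  have hα_mem : α ∈ AddSubgroup.closure (projectionTraces A τ) :=
    hcyc ▸ AddSubgroup.mem_zmultiples α
  have mul_mem {r : ℝ} (hr : r ∈ fundamentalGroup A τ) : r * α ∈ AddSubgroup.zmultiples α :=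
    hcyc ▸ mul_mem_closure_projectionTraces hτ huniq hr hα_mem
  exact eq_one_of_mul_mem_zmultiples hα.ne' (nonneg_of_mem_fundamentalGroup hτ ht) hts
    (mul_mem ht) (mul_mem hs)
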